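/- For every finite tree T (with at least one vertex), Γ(T) ≤ 2·z(T) − 1, where Γ denotes the Grundy number and z the z-chromatic number. -/

import Mathlib

open SimpleGraph

universe u v

/-- `c` is a z-coloring of `G` using exactly the `k` colors `0, …, k-1`:
it is proper, every color class is nonempty, every vertex of color `j` has a
neighbor of each color `i < j` (Grundy property), and there are vertices
`u 0, …, u (k-1)` with `u j` of color `j`, such that `u (k-1)` is adjacent to
every other `u j`, and each `u j` has a neighbor of every color `i ≠ j`. -/
def IsZColoring {V : Type u} (G : SimpleGraph V) (k : ℕ) (c : V → ℕ) : Prop :=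
  (∀ v, c v < k) ∧
  (∀ ⦃x y : V⦄, G.Adj x y → c x ≠ c y) ∧
  (∀ i, i < k → ∃ v, c v = i) ∧
  (∀ v : V, ∀ i, i < c v → ∃ w, G.Adj v w ∧ c w = i) ∧
  (∃ u : ℕ → V,
    (∀ j, j < k → c (u j) = j) ∧
    (∀ j, j < k - 1 → G.Adj (u (k - 1)) (u j)) ∧
    (∀ i, i < k → ∀ j, j < k → i ≠ j → ∃ w, G.Adj (u j) w ∧ c w = i))

/-- The z-chromatic number: the maximum number of colors in a z-coloring. -/
noncomputable def zNum {V : Type u} (G : SimpleGraph V) : ℕ :=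
  sSup {k | ∃ c : V → ℕ, IsZColoring G k c}

/-- `c` is a Grundy coloring of `G` using exactly the `k` colors `0, …, k-1`. -/
def IsGrundyColoring {V : Type u} (G : SimpleGraph V) (k : ℕ) (c : V → ℕ) : Prop :=
  (∀ v, c v < k) ∧
  (∀ ⦃x y : V⦄, G.Adj x y → c x ≠ c y) ∧
  (∀ i, i < k → ∃ v, c v = i) ∧
  (∀ v : V, ∀ i, i < c v → ∃ w, G.Adj v w ∧ c w = i)

/-- The Grundy number: the maximum number of colors in a Grundy coloring. -/
noncomputable def grundyNum {V : Type u} (G : SimpleGraph V) : ℕ :=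
  sSup {k | ∃ c : V → ℕ, IsGrundyColoring G k c}

/-- `c` is a b-coloring of `G` using exactly the `k` colors `0, …, k-1`:
proper, and every color class contains a vertex adjacent to a vertex of every
other color class. -/
def IsBColoring {V : Type u} (G : SimpleGraph V) (k : ℕ) (c : V → ℕ) : Prop :=
  (∀ v, c v < k) ∧
  (∀ ⦃x y : V⦄, G.Adj x y → c x ≠ c y) ∧
  (∀ i, i < k → ∃ v, c v = i ∧ ∀ j, j < k → j ≠ i → ∃ w, G.Adj v w ∧ c w = j)

/-- The b-chromatic number: the maximum number of colors in a b-coloring. -/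
noncomputable def bNum {V : Type u} (G : SimpleGraph V) : ℕ :=
  sSup {k | ∃ c : V → ℕ, IsBColoring G k c}

/-- The chromatic number, as a natural number. -/
noncomputable def chromNum {V : Type u} (G : SimpleGraph V) : ℕ :=
  sInf {k | G.Colorable k}

/-- The maximum degree of a graph (degree measured by `Set.ncard` of the
neighbor set), as the supremum of all achieved degrees. -/
noncomputable def maxDeg {V : Type u} (G : SimpleGraph V) : ℕ :=
  sSup {d | ∃ v : V, (G.neighborSet v).ncard = d}

/-!
Let `c` be a Grundy coloring of a forest with at least `2q` colors and root the forest at a vertex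
`r` of the top color. Give `r` the new color `q`, and for each `j < q` give the new color `j` to a
neighbor of `r` whose old color lies `j + 1` below that of `r`. By counting colors, each of these
neighbors has children of all old colors below `q` except possibly `j`. Below them the old colors
less than `q` are kept as long as they decrease along a branch. This yields a z-coloring with
`q + 1` colors of a subforest that contains the parent of each of its vertices; every other vertex
can be colored from its parent, using the colors `0` and `1` only.
-/

section

variable {V : Type u} {G : SimpleGraph V}

theorem exists_rightInverse_apply_eq {α β : Type*} {f : α → β} (hf : f.Surjective) (a : α) :
    ∃ g : β → α, g.RightInverse f ∧ g (f a) = a := by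
  classical
  refine ⟨Function.update (Function.surjInv hf) (f a) a, fun b ↦ ?_, Function.update_self ..⟩
  obtain rfl | hb := eq_or_ne b (f a)
  · rw [Function.update_self]
  · rw [Function.update_of_ne hb, Function.surjInv_eq hf]

/-- `parent` orients the edges of the forest `G` towards its roots, the vertices without parent.
Well-foundedness says that every chain of parents ends at a root. -/
structure IsParentMap (G : SimpleGraph V) (parent : V → Option V) : Prop where
  adj_iff (x y : V) : G.Adj x y ↔ parent x = some y ∨ parent y = some x
  wellFounded : WellFounded fun p x ↦ parent x = some p

theorem exists_isParentMap_of_depth (depth : V → ℕ)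
    (hne : ∀ x y, G.Adj x y → depth x ≠ depth y)
    (huniq : ∀ x p q, G.Adj x p → G.Adj x q → depth p < depth x → depth q < depth x → p = q) :
    ∃ parent, IsParentMap G parent ∧
      ∀ x p, parent x = some p ↔ G.Adj x p ∧ depth p < depth x := by
  classical
  let parent (x : V) : Option V :=
    if h : ∃ p, G.Adj x p ∧ depth p < depth x then some h.choose else none
  have parent_eq (x p : V) : parent x = some p ↔ G.Adj x p ∧ depth p < depth x := by
    refine ⟨fun hp ↦ ?_, fun hp ↦ ?_⟩
    · obtain ⟨h, hp⟩ := Option.dite_none_right_eq_some.mp hp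
      exact Option.some.inj hp ▸ h.choose_spec
    · have h : ∃ p, G.Adj x p ∧ depth p < depth x := ⟨p, hp⟩
      rw [← huniq x _ _ h.choose_spec.1 hp.1 h.choose_spec.2 hp.2]
      exact dif_pos h
  refine ⟨parent, ⟨fun x y ↦ ?_, ?_⟩, parent_eq⟩
  · rw [parent_eq, parent_eq, G.adj_comm y x, ← and_or_left]
    exact ⟨fun hxy ↦ ⟨hxy, (hne x y hxy).lt_or_gt.symm⟩, And.left⟩
  · exact Subrelation.wf (fun hp ↦ ((parent_eq ..).mp hp).2) (measure depth).wf

theorem penultimate_eq_or_penultimate_eq (hG : G.IsAcyclic) {r x y : V} {p : G.Walk r x}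
    {q : G.Walk r y} (hp : p.IsPath) (hq : q.IsPath) (hxy : G.Adj x y) :
    (q.penultimate = x ∧ q.length = p.length + 1) ∨
      (p.penultimate = y ∧ p.length = q.length + 1) := by
  by_cases hx : x ∈ q.support
  · left
    simp [hG.path_concat hp hq hxy hx]
  · right
    have hy := hG.mem_support_of_ne_mem_support_of_adj_of_isPath hp hq hxy hx
    simp [hG.path_concat hq hp hxy.symm hy]

theorem dist_ne_dist_of_adj (hG : G.IsAcyclic) {r x y : V} (hx : G.Reachable r x)
    (hxy : G.Adj x y) : G.dist r x ≠ G.dist r y := by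
  obtain ⟨p, hp, hpx⟩ := hx.exists_path_of_dist
  obtain ⟨q, hq, hqy⟩ := (hx.trans hxy.reachable).exists_path_of_dist
  obtain ⟨-, h⟩ | ⟨-, h⟩ := penultimate_eq_or_penultimate_eq hG hp hq hxy <;> lia

theorem eq_of_adj_of_dist_lt (hG : G.IsAcyclic) {r x y z : V} (hx : G.Reachable r x)
    (hxy : G.Adj x y) (hxz : G.Adj x z) (hy : G.dist r y < G.dist r x)
    (hz : G.dist r z < G.dist r x) : y = z := by
  obtain ⟨p, hp, hpx⟩ := hx.exists_path_of_dist
  have penultimate_eq {w : V} (hxw : G.Adj x w) (hw : G.dist r w < G.dist r x) :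
      p.penultimate = w := by
    obtain ⟨q, hq, hqw⟩ := (hx.trans hxw.reachable).exists_path_of_dist
    obtain ⟨-, h⟩ | ⟨h, -⟩ := penultimate_eq_or_penultimate_eq hG hp hq hxw
    · lia
    · exact h
  rw [← penultimate_eq hxy hy, penultimate_eq hxz hz]

theorem exists_isParentMap (hG : G.IsAcyclic) (r : V) :
    ∃ parent, IsParentMap G parent ∧ parent r = none := by
  obtain ⟨rep, hrep, hr⟩ :=
    exists_rightInverse_apply_eq (f := G.connectedComponentMk) Quot.mk_surjective r
  let root (x : V) : V := rep (G.connectedComponentMk x)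
  have reachable_root (x : V) : G.Reachable (root x) x := ConnectedComponent.exact (hrep _)
  have root_eq {x y : V} (hxy : G.Adj x y) : root y = root x :=
    congrArg rep (ConnectedComponent.connectedComponentMk_eq_of_adj hxy).symm
  obtain ⟨parent, hparent, parent_eq⟩ :=
    exists_isParentMap_of_depth (G := G) (fun x ↦ G.dist (root x) x)
      (fun x y hxy ↦ by
        rw [root_eq hxy]
        exact dist_ne_dist_of_adj hG (reachable_root x) hxy)
      (fun x p q hp hq ↦ by
        rw [root_eq hp, root_eq hq]
        exact eq_of_adj_of_dist_lt hG (reachable_root x) hp hq)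
  have dist_root : G.dist (root r) r = 0 := by rw [show root r = r from hr, dist_self]
  refine ⟨parent, hparent, Option.eq_none_iff_forall_ne_some.mpr fun p hp ↦ ?_⟩
  exact Nat.not_lt_zero _ (dist_root ▸ ((parent_eq r p).mp hp).2)

/-- A partial Grundy coloring: on `S`, adjacent vertices have different colors, and every vertex has
a neighbor in `S` of each smaller color. -/
structure IsGreedyOn (G : SimpleGraph V) (S : Set V) (c : V → ℕ) : Prop where
  ne_of_adj {x y : V} : x ∈ S → y ∈ S → G.Adj x y → c x ≠ c y
  exists_adj {x : V} {i : ℕ} : x ∈ S → i < c x → ∃ y ∈ S, G.Adj x y ∧ c y = i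

namespace IsParentMap

variable {parent : V → Option V}

theorem adj (h : IsParentMap G parent) {x p : V} (hp : parent x = some p) : G.Adj x p :=
  (h.adj_iff x p).mpr (.inl hp)

theorem exists_rec (h : IsParentMap G parent) {α : Type*} (step : V → Option α → α) :
    ∃ F : V → α, ∀ x, F x = step x ((parent x).map F) := by
  refine ⟨h.wellFounded.fix fun x F ↦ step x ((parent x).attach.map fun p ↦ F p.1 p.2), fun x ↦ ?_⟩
  rw [WellFounded.fix_eq]
  exact congrArg (step x) (Option.attach_map_val ..)

theorem exists_isGreedyOn_univ_extension (h : IsParentMap G parent) {S : Set V} {c : V → ℕ}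
    (hS : ∀ x ∈ S, ∀ p, parent x = some p → p ∈ S) (hc : IsGreedyOn G S c) :
    ∃ F : V → ℕ, S.EqOn F c ∧ (∀ x ∉ S, F x ≤ 1) ∧ IsGreedyOn G Set.univ F := by
  classical
  obtain ⟨F, hF⟩ := h.exists_rec fun x o ↦
    if x ∈ S then c x else if o = some 0 then 1 else 0
  have F_of_mem {x} (hx : x ∈ S) : F x = c x := by rw [hF, if_pos hx]
  have F_of_notMem {x} (hx : x ∉ S) :
      F x = if (parent x).map F = some 0 then 1 else 0 := by rw [hF, if_neg hx]
  have F_ne_parent {x p} (hp : parent x = some p) : F x ≠ F p := by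
    by_cases hx : x ∈ S
    · have hpS := hS x hx p hp
      rw [F_of_mem hx, F_of_mem hpS]
      exact hc.ne_of_adj hx hpS (h.adj hp)
    · simp only [F_of_notMem hx, hp, Option.map_some, Option.some_inj]
      split_ifs <;> lia
  refine ⟨F, fun x ↦ F_of_mem, fun x hx ↦ ?_, fun {x y} _ _ hxy ↦ ?_, fun {x i} _ hi ↦ ?_⟩
  · rw [F_of_notMem hx]
    split_ifs <;> lia
  · obtain hy | hx := (h.adj_iff x y).mp hxy
    exacts [F_ne_parent hy, (F_ne_parent hx).symm]
  · by_cases hx : x ∈ S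
    · obtain ⟨y, hy, hxy, rfl⟩ := hc.exists_adj hx (F_of_mem hx ▸ hi)
      exact ⟨y, trivial, hxy, F_of_mem hy⟩
    · rw [F_of_notMem hx] at hi
      split_ifs at hi with h0
      · obtain ⟨p, hp, hFp⟩ := Option.map_eq_some_iff.mp h0
        exact ⟨p, trivial, h.adj hp, by lia⟩
      · lia

end IsParentMap

open scoped Classical in
/-- The new color `q` for the center `r` and `j` for the hub `w j`; other colors are kept. -/
noncomputable def recolor (c : V → ℕ) (r : V) {q : ℕ} (w : Fin q → V) : V → ℕ :=
  Function.update (Function.extend w (↑) c) r q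

theorem recolor_center (c : V → ℕ) (r : V) {q : ℕ} (w : Fin q → V) : recolor c r w r = q := by
  classical exact Function.update_self ..

/-- The subforest on which `recolor` is greedy: the center, the hubs, and below them the branches
on which the colors decrease from below `q`, omitting children that `recolor` would bring into
conflict. -/
inductive IsCore (parent : V → Option V) (c : V → ℕ) (r : V) {q : ℕ} (w : Fin q → V) :
    V → Prop
  | center : IsCore parent c r w r
  | hub (j : Fin q) : IsCore parent c r w (w j)
  | child {x p : V} : IsCore parent c r w p → p ≠ r → parent x = some p → c x < c p → c x < q →
      c x ≠ recolor c r w p → IsCore parent c r w x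

/-- The data from which a z-coloring with `q + 1` colors is built: a coloring `c` of a rooted
forest in which every vertex sees all smaller colors, and a root `r`, the center, with `q` neighbors
`w j`, the hubs, of colors `c r - 1, c r - 2, …`. -/
structure IsHubSystem (G : SimpleGraph V) (parent : V → Option V) (c : V → ℕ) (r : V) {q : ℕ}
    (w : Fin q → V) : Prop where
  isParentMap : IsParentMap G parent
  parent_center : parent r = none
  exists_adj {x : V} {i : ℕ} : i < c x → ∃ y, G.Adj x y ∧ c y = i
  adj_hub (j : Fin q) : G.Adj r (w j)
  color_hub (j : Fin q) : c (w j) + j + 1 = c r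
  two_mul_le : 2 * q ≤ c r + 1

namespace IsHubSystem

variable {parent : V → Option V} {c : V → ℕ} {r : V} {q : ℕ} {w : Fin q → V}

theorem parent_hub (h : IsHubSystem G parent c r w) (j : Fin q) : parent (w j) = some r := by
  simpa [h.parent_center] using (h.isParentMap.adj_iff _ _).mp (h.adj_hub j)

theorem hub_injective (h : IsHubSystem G parent c r w) : w.Injective := fun i j hij ↦ by
  have hi := h.color_hub i
  have hj := h.color_hub j
  rw [hij] at hi
  lia

theorem recolor_hub (h : IsHubSystem G parent c r w) (j : Fin q) : recolor c r w (w j) = j := by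
  classical
  rw [recolor, Function.update_of_ne (h.adj_hub j).ne', h.hub_injective.extend_apply]

theorem recolor_child (h : IsHubSystem G parent c r w) {x p : V} (hp : parent x = some p)
    (hpr : p ≠ r) : recolor c r w x = c x := by
  classical
  have hx : x ≠ r := by
    rintro rfl
    simp [h.parent_center] at hp
  have hw : ¬ ∃ j, w j = x := by
    rintro ⟨j, rfl⟩
    exact hpr (Option.some.inj (hp.symm.trans (h.parent_hub j)))
  rw [recolor, Function.update_of_ne hx, Function.extend_apply' _ _ _ hw]

theorem recolor_lt_and_le (h : IsHubSystem G parent c r w) {x : V} (hx : IsCore parent c r w x)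
    (hxr : x ≠ r) : recolor c r w x < q ∧ recolor c r w x ≤ c x := by
  cases hx with
  | center => exact absurd rfl hxr
  | hub j =>
    have := h.color_hub j
    have := h.two_mul_le
    rw [h.recolor_hub]
    lia
  | child _ hpr hp _ hxq =>
    rw [h.recolor_child hp hpr]
    exact ⟨hxq, le_rfl⟩

theorem isCore_parent (h : IsHubSystem G parent c r w) {x p : V} (hx : IsCore parent c r w x)
    (hp : parent x = some p) : IsCore parent c r w p := by
  cases hx with
  | center => simp [h.parent_center] at hp
  | hub j => exact Option.some.inj (hp.symm.trans (h.parent_hub j)) ▸ .center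
  | child hp' _ hxp => exact Option.some.inj (hxp.symm.trans hp) ▸ hp'

theorem color_lt_parent (h : IsHubSystem G parent c r w) {x p : V} (hx : IsCore parent c r w x)
    (hp : parent x = some p) : c x < c p := by
  cases hx with
  | center => simp [h.parent_center] at hp
  | hub j =>
    obtain rfl := Option.some.inj (hp.symm.trans (h.parent_hub j))
    have := h.color_hub j
    lia
  | child _ _ hxp hlt => exact Option.some.inj (hxp.symm.trans hp) ▸ hlt

theorem recolor_ne_parent (h : IsHubSystem G parent c r w) {x p : V} (hx : IsCore parent c r w x)
    (hp : parent x = some p) : recolor c r w x ≠ recolor c r w p := by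
  cases hx with
  | center => simp [h.parent_center] at hp
  | hub j =>
    obtain rfl := Option.some.inj (hp.symm.trans (h.parent_hub j))
    rw [h.recolor_hub, recolor_center]
    exact j.isLt.ne
  | child _ hpr hxp _ _ hne =>
    obtain rfl := Option.some.inj (hp.symm.trans hxp)
    exact h.recolor_child hp hpr ▸ hne

theorem exists_isCore_child (h : IsHubSystem G parent c r w) {x : V} (hx : IsCore parent c r w x)
    (hxr : x ≠ r) {i : ℕ} (hic : i < c x) (hiq : i < q) (hi : i ≠ recolor c r w x) :
    ∃ y, IsCore parent c r w y ∧ G.Adj x y ∧ recolor c r w y = i := by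
  obtain ⟨y, hxy, rfl⟩ := h.exists_adj hic
  obtain hy | hy := (h.isParentMap.adj_iff x y).mp hxy
  · exact absurd hic (h.color_lt_parent hx hy).not_gt
  · exact ⟨y, .child hx hxr hy hic hiq hi, hxy, h.recolor_child hy hxr⟩

theorem isGreedyOn_core (h : IsHubSystem G parent c r w) :
    IsGreedyOn G {x | IsCore parent c r w x} (recolor c r w) := by
  refine ⟨fun {x y} hx hy hxy ↦ ?_, fun {x i} hx hi ↦ ?_⟩
  · obtain hp | hp := (h.isParentMap.adj_iff x y).mp hxy
    exacts [h.recolor_ne_parent hx hp, (h.recolor_ne_parent hy hp).symm]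
  · obtain rfl | hxr := eq_or_ne x r
    · rw [recolor_center] at hi
      exact ⟨w ⟨i, hi⟩, .hub _, h.adj_hub _, h.recolor_hub _⟩
    · obtain ⟨hlt, hle⟩ := h.recolor_lt_and_le hx hxr
      exact h.exists_isCore_child hx hxr (hi.trans_le hle) (hi.trans hlt) hi.ne

theorem exists_adj_hub (h : IsHubSystem G parent c r w) (j : Fin q) {i : ℕ} (hi : i ≤ q)
    (hij : i ≠ j) : ∃ y, IsCore parent c r w y ∧ G.Adj (w j) y ∧ recolor c r w y = i := by
  obtain rfl | hiq := hi.eq_or_lt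
  · exact ⟨r, .center, (h.adj_hub j).symm, recolor_center ..⟩
  · have hic : i < c (w j) := by
      have := h.color_hub j
      have := h.two_mul_le
      lia
    exact h.exists_isCore_child (.hub j) (h.adj_hub j).ne' hic hiq (by rwa [h.recolor_hub])

theorem recolor_le (h : IsHubSystem G parent c r w) {x : V} (hx : IsCore parent c r w x) :
    recolor c r w x ≤ q := by
  obtain rfl | hxr := eq_or_ne x r
  · exact (recolor_center ..).le
  · exact (h.recolor_lt_and_le hx hxr).1.le

theorem exists_isZColoring (h : IsHubSystem G parent c r w) (hq : 1 ≤ q) :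
    ∃ F, IsZColoring G (q + 1) F := by
  classical
  obtain ⟨F, hF, hF1, hgreedy⟩ := h.isParentMap.exists_isGreedyOn_univ_extension
    (fun _ hx _ ↦ h.isCore_parent hx) h.isGreedyOn_core
  have F_center : F r = q := (hF .center).trans (recolor_center ..)
  have F_hub (j : Fin q) : F (w j) = j := (hF (.hub j)).trans (h.recolor_hub j)
  have F_le (x : V) : F x ≤ q := by
    by_cases hx : IsCore parent c r w x
    · exact hF hx ▸ h.recolor_le hx
    · exact (hF1 x hx).trans hq
  let u (j : ℕ) : V := if hj : j < q then w ⟨j, hj⟩ else r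
  have u_center : u q = r := dif_neg (lt_irrefl q)
  have u_hub {j : ℕ} (hj : j < q) : u j = w ⟨j, hj⟩ := dif_pos hj
  have F_u (j : ℕ) (hj : j < q + 1) : F (u j) = j := by
    obtain rfl | hj := (Nat.lt_succ_iff.mp hj).eq_or_lt
    · rw [u_center, F_center]
    · rw [u_hub hj, F_hub]
  refine ⟨F, fun x ↦ Nat.lt_succ_of_le (F_le x), fun x y ↦ hgreedy.ne_of_adj trivial trivial,
    fun i hi ↦ ⟨u i, F_u i hi⟩, fun x i hi ↦ ?_, u, F_u, fun j hj ↦ ?_, fun i hi j hj hij ↦ ?_⟩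
  · obtain ⟨y, -, hy⟩ := hgreedy.exists_adj trivial hi
    exact ⟨y, hy⟩
  · rw [Nat.add_sub_cancel] at hj ⊢
    rw [u_center, u_hub hj]
    exact h.adj_hub _
  · obtain rfl | hj := (Nat.lt_succ_iff.mp hj).eq_or_lt
    · have hi : i < j := by lia
      rw [u_center]
      exact ⟨w ⟨i, hi⟩, h.adj_hub _, F_hub _⟩
    · rw [u_hub hj]
      obtain ⟨y, hy, hadj, hyi⟩ := h.exists_adj_hub ⟨j, hj⟩ (Nat.lt_succ_iff.mp hi) hij
      exact ⟨y, hadj, (hF hy).trans hyi⟩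

end IsHubSystem

theorem IsGrundyColoring.exists_isZColoring (hG : G.IsAcyclic) {m q : ℕ} {c : V → ℕ}
    (hc : IsGrundyColoring G m c) (hq : 1 ≤ q) (hqm : 2 * q ≤ m) :
    ∃ F, IsZColoring G (q + 1) F := by
  obtain ⟨-, -, hsurj, hgreedy⟩ := hc
  obtain ⟨r, hr⟩ := hsurj (m - 1) (by lia)
  obtain ⟨parent, hparent, hroot⟩ := exists_isParentMap hG r
  have exists_hub (j : Fin q) : ∃ w, G.Adj r w ∧ c w = c r - 1 - j := hgreedy r _ (by lia)
  choose w adj_hub color_hub using exists_hub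
  have h : IsHubSystem G parent c r w :=
    { isParentMap := hparent
      parent_center := hroot
      exists_adj := hgreedy _ _
      adj_hub := adj_hub
      color_hub := fun j ↦ by
        have := color_hub j
        lia
      two_mul_le := by lia }
  exact h.exists_isZColoring hq

theorem IsGrundyColoring.isZColoring_one {c : V → ℕ} (hc : IsGrundyColoring G 1 c) :
    IsZColoring G 1 c := by
  obtain ⟨hlt, hne, hsurj, hgreedy⟩ := hc
  obtain ⟨v, hv⟩ := hsurj 0 one_pos
  exact ⟨hlt, hne, hsurj, hgreedy, fun _ ↦ v, by lia, by lia, by lia⟩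

theorem IsZColoring.isGrundyColoring {k : ℕ} {c : V → ℕ} (hc : IsZColoring G k c) :
    IsGrundyColoring G k c :=
  ⟨hc.1, hc.2.1, hc.2.2.1, hc.2.2.2.1⟩

theorem bddAbove_isGrundyColoring [Finite V] (G : SimpleGraph V) :
    BddAbove {k | ∃ c : V → ℕ, IsGrundyColoring G k c} := by
  refine ⟨Nat.card V, ?_⟩
  rintro k ⟨c, hlt, -, hsurj, -⟩
  have surjective : Function.Surjective fun v ↦ (⟨c v, hlt v⟩ : Fin k) := fun i ↦
    (hsurj i i.isLt).imp fun _ ↦ Fin.ext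
  simpa using Nat.card_le_card_of_surjective _ surjective

theorem grundy_le_two_z_sub_one_general [Nonempty V] (hG : G.IsAcyclic)
    (hbdd : BddAbove {k | ∃ c : V → ℕ, IsGrundyColoring G k c}) :
    grundyNum G ≤ 2 * zNum G - 1 := by
  have hbdd_z : BddAbove {k | ∃ c : V → ℕ, IsZColoring G k c} := by
    refine hbdd.mono ?_
    rintro k ⟨c, hc⟩
    exact ⟨c, hc.isGrundyColoring⟩
  have le_zNum {k : ℕ} (hk : ∃ c, IsZColoring G k c) : k ≤ zNum G := le_csSup hbdd_z hk
  refine csSup_le' ?_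
  rintro m ⟨c, hc⟩
  have m_pos : 0 < m := Nat.zero_lt_of_lt (hc.1 (Classical.arbitrary V))
  obtain rfl | hm : m = 1 ∨ 2 ≤ m := by lia
  · have := le_zNum ⟨_, hc.isZColoring_one⟩
    lia
  · have := le_zNum (hc.exists_isZColoring hG (q := m / 2) (by lia) (by lia))
    lia

end

/-- for every finite tree `T` (nonempty, being a tree),
`Γ(T) ≤ 2 · z(T) - 1`. -/
theorem grundy_le_two_z_sub_one {V : Type u} [Fintype V] (T : SimpleGraph V)
    (hT : T.IsTree) :
    grundyNum T ≤ 2 * zNum T - 1 :=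
  have := hT.connected.nonempty
  grundy_le_two_z_sub_one_general hT.isAcyclic (bddAbove_isGrundyColoring T)
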